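/- Fix integers n ≥ 1 and k ≥ 3. Then ∫_{Γ(k)} w_k dx = 2^{−(k−1)n} (2^{(k−1)n}+1)^{−2}; equivalently, A_k · ∫_{Γ(k)} w_k dx = 1. -/

import Mathlib

open MeasureTheory Set ENNReal

noncomputable section

/-- The half-open axis-parallel cube with corner `a` and side length `l`. -/
def Cube (n : ℕ) (a : Fin n → ℝ) (l : ℝ) : Set (Fin n → ℝ) :=
  Set.univ.pi fun i => Set.Ico (a i) (a i + l)

/-- The uncentered Hardy–Littlewood maximal function over axis-parallel cubes:
`Mg(x) = sup_{Q ∋ x} |Q|⁻¹ ∫_Q g`. -/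
def MaxFn {n : ℕ} (g : (Fin n → ℝ) → ℝ≥0∞) (x : Fin n → ℝ) : ℝ≥0∞ :=
  ⨆ (a : Fin n → ℝ) (l : ℝ) (_ : 0 < l) (_ : x ∈ Cube n a l),
    (volume (Cube n a l))⁻¹ * ∫⁻ y in Cube n a l, g y

/-- The cube of the sparse family `S` with parameters `k, N`:
`[0, 2^{-N})^n` for `k = 0` and `[2^k, 2^k + 2^{-N})^n` for `k ≥ 1`. -/
def sCube (n k N : ℕ) : Set (Fin n → ℝ) :=
  Cube n (fun _ => if k = 0 then 0 else (2:ℝ)^k) ((2:ℝ)^(-(N:ℤ)))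

/-- The sparse operator `T_S g = Σ_{Q ∈ S} (|Q|⁻¹ ∫_Q g) 1_Q`. -/
def TS {n : ℕ} (g : (Fin n → ℝ) → ℝ≥0∞) (x : Fin n → ℝ) : ℝ≥0∞ :=
  ∑' q : ℕ × ℕ,
    (sCube n q.1 q.2).indicator
      (fun _ => (volume (sCube n q.1 q.2))⁻¹ * ∫⁻ y in sCube n q.1 q.2, g y) x

/-- The `j`-th digit (for `j ≥ 1`) of `t ∈ [0,1)` in base `2^k`, using the expansion
which is not eventually constant `2^k - 1`. -/
def digit (k j : ℕ) (t : ℝ) : ℤ := ⌊t * 2^(k*j)⌋ % 2^k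

/-- `Ω_m(k) ⊆ [0,1)^n`: the points all of whose coordinates have base-`2^k` digits
in `{0, …, 2^{k-1}-1}` for `1 ≤ j ≤ m-1`, with `m`-th digit equal to `2^{k-1}`. -/
def Omega (n k m : ℕ) : Set (Fin n → ℝ) :=
  {x | (∀ i, x i ∈ Set.Ico (0:ℝ) 1) ∧
    ∀ i, (∀ j, 1 ≤ j → j < m → digit k j (x i) < 2^(k-1)) ∧
      digit k m (x i) = 2^(k-1)}

/-- The weight `w_k = Σ_{m ≥ 1} (2^{kn}/(2^{(k-1)n}+1))^m 1_{Ω_m(k)}`. -/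
def wk (n k : ℕ) : (Fin n → ℝ) → ℝ≥0∞ := fun x =>
  ∑' m : ℕ,
    (Omega n k (m+1)).indicator
      (fun _ => ((2:ℝ≥0∞)^(k*n) / ((2:ℝ≥0∞)^((k-1)*n) + 1))^(m+1)) x

/-- `Q_1^m(k) = [2^{-k(m-1)-1}, 2^{-k(m-1)-1} + 2^{-km})^n`. -/
def Q1 (n k m : ℕ) : Set (Fin n → ℝ) :=
  Cube n (fun _ => (2:ℝ)^(-(k*(m-1) : ℤ) - 1)) ((2:ℝ)^(-(k*m : ℤ)))

/-- `Γ(k) = ⋃_{m ≥ 3} Q_1^m(k)`. -/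
def Gamma (n k : ℕ) : Set (Fin n → ℝ) := ⋃ m : ℕ, Q1 n k (m+3)

/-- `A_k = 2^{(k-1)n} (2^{(k-1)n}+1)^2`. -/
def Ak (n k : ℕ) : ℝ≥0∞ := 2^((k-1)*n) * (2^((k-1)*n) + 1)^2

/-- The weight `w(x) = Σ_{k ≥ 3} A_k w_k(x - 2⃗^k) 1_{Γ(k)}(x - 2⃗^k)`. -/
def bigW (n : ℕ) : (Fin n → ℝ) → ℝ≥0∞ := fun x =>
  ∑' k : ℕ,
    (Gamma n (k+3)).indicator (fun z => Ak n (k+3) * wk n (k+3) z)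
      (fun i => x i - (2:ℝ)^(k+3))

/-- The test function `f(x) = Σ_{k ≥ 3} k^{-ε} A_k w_k(x - 2⃗^k)`. -/
def bigF (n : ℕ) (ε : ℝ) : (Fin n → ℝ) → ℝ≥0∞ := fun x =>
  ∑' k : ℕ,
    ((k+3 : ℝ≥0∞) ^ (-ε)) * Ak n (k+3) * wk n (k+3) (fun i => x i - (2:ℝ)^(k+3))

/-- `T` is bounded from `L^p(v)` to `L^p(u)` (for nonnegative functions, which are
required to be supported in `supp v`): there is a finite constant `C` with
`‖Tf‖_{L^p(u)} ≤ C ‖f‖_{L^p(v)}` for all `f ∈ L^p(v)`. -/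
def BddOn {n : ℕ} (T : ((Fin n → ℝ) → ℝ≥0∞) → (Fin n → ℝ) → ℝ≥0∞)
    (p : ℝ) (v u : (Fin n → ℝ) → ℝ≥0∞) : Prop :=
  ∃ C : ℝ≥0∞, C ≠ ∞ ∧ ∀ f : (Fin n → ℝ) → ℝ≥0∞, Measurable f →
    (∀ x, v x = 0 → f x = 0) → (∫⁻ x, f x ^ p * v x) < ∞ →
    ∫⁻ x, T f x ^ p * u x ≤ C ^ p * ∫⁻ x, f x ^ p * v x

/-- The dual weight `u^{1-p'} 1_{supp u}`. -/
def dualW {n : ℕ} (u : (Fin n → ℝ) → ℝ≥0∞) (q : ℝ) : (Fin n → ℝ) → ℝ≥0∞ :=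
  fun x => if u x = 0 then 0 else u x ^ (1 - q)

/-!
Membership in `Q_1^m(k)` says that `⌊x_ℓ 2^{km}⌋ = 2^{k-1}` for every coordinate, so
the first `m - 1` digits of `x_ℓ` vanish and the `m`-th is `2^{k-1}`: thus `Q_1^m(k) ⊆ Ω_m(k)`.
The `Ω_m(k)` are pairwise disjoint, so `w_k` is constant on `Q_1^m(k)`. With `b = 2^{(k-1)n}`, the
value `(2^{kn}/(b+1))^m` times the volume `2^{-kmn}` gives the mass `(b+1)^{-m}`, and the
geometric series starting at `m = s + 1` sums to `b⁻¹ (b+1)^{-s}`; `Γ(k)` is the case `s = 2`.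
-/

section Floor

variable {R : Type*} [Ring R] [LinearOrder R] [IsStrictOrderedRing R] [FloorRing R]

lemma floor_mul_pow_eq_floor_mul_pow_ediv {b i j : ℕ} (hb : b ≠ 0) (hij : i ≤ j) (t : R) :
    ⌊t * (b : R) ^ i⌋ = ⌊t * (b : R) ^ j⌋ / (b : ℤ) ^ (j - i) := by
  have h := Int.mul_natCast_floor_div_cancel (pow_ne_zero (j - i) hb) (t * (b : R) ^ i)
  rwa [Nat.cast_pow, Nat.cast_pow, mul_assoc, ← pow_add, Nat.add_sub_cancel' hij, eq_comm] at h

lemma floor_mul_pow_eq_zero {b i j : ℕ} (hb : b ≠ 0) (hij : i ≤ j) {t : R}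
    (h0 : 0 ≤ ⌊t * (b : R) ^ j⌋) (h1 : ⌊t * (b : R) ^ j⌋ < (b : ℤ) ^ (j - i)) :
    ⌊t * (b : R) ^ i⌋ = 0 := by
  rw [floor_mul_pow_eq_floor_mul_pow_ediv hb hij, Int.ediv_eq_zero_of_lt h0 h1]

end Floor

section Cubes

lemma measurableSet_Cube (n : ℕ) (a : Fin n → ℝ) (l : ℝ) : MeasurableSet (Cube n a l) :=
  MeasurableSet.univ_pi fun _ => measurableSet_Ico

lemma volume_Cube (n : ℕ) (a : Fin n → ℝ) (l : ℝ) :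
    volume (Cube n a l) = ENNReal.ofReal l ^ n := by
  simp [Cube, Real.volume_pi_Ico]

lemma measurableSet_Q1 (n k m : ℕ) : MeasurableSet (Q1 n k m) :=
  measurableSet_Cube ..

lemma volume_Q1 (n k m : ℕ) : volume (Q1 n k m) = ((2 : ℝ≥0∞) ^ (k * n))⁻¹ ^ m := by
  have side : (2 : ℝ) ^ (-(k * m : ℤ)) = (2 ^ (k * m))⁻¹ := by
    rw [zpow_neg]; norm_cast
  rw [Q1, volume_Cube, side, ENNReal.ofReal_inv_of_pos (by positivity),
    ENNReal.ofReal_pow zero_le_two, ENNReal.ofReal_ofNat, ENNReal.inv_pow, ENNReal.inv_pow,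
    ← pow_mul, ← pow_mul, mul_right_comm]

end Cubes

section Digits

variable {n k m : ℕ}

lemma mem_Q1_iff_floor (hk : 1 ≤ k) {x : Fin n → ℝ} :
    x ∈ Q1 n k m ↔ ∀ i, ⌊x i * 2 ^ (k * m)⌋ = 2 ^ (k - 1) := by
  have side : (2 : ℝ) ^ (-(k * m : ℤ)) = 1 / 2 ^ (k * m) := by
    rw [zpow_neg, one_div]; norm_cast
  have corner : (2 : ℝ) ^ (-(k * (m - 1) : ℤ) - 1) = 2 ^ (k - 1) / 2 ^ (k * m) := by
    rw [← zpow_natCast, ← zpow_natCast, ← zpow_sub₀ two_ne_zero]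
    congr 1
    push_cast [Nat.cast_sub hk]
    ring
  have hpos : (0 : ℝ) < 2 ^ (k * m) := by positivity
  simp only [Q1, Cube, mem_univ_pi, mem_Ico, side, corner, ← add_div, div_le_iff₀ hpos,
    lt_div_iff₀ hpos, Int.floor_eq_iff, Int.cast_pow, Int.cast_ofNat]

lemma floor_mul_two_pow_eq_zero_of_lt (hk : 1 ≤ k) {t : ℝ} (ht : ⌊t * 2 ^ (k * m)⌋ = 2 ^ (k - 1))
    {j : ℕ} (hj : j < m) : ⌊t * 2 ^ (k * j)⌋ = 0 := by
  have hexp : k - 1 < k * m - k * j := by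
    rw [← Nat.mul_sub]
    exact (Nat.sub_one_lt (by omega)).trans_le (Nat.le_mul_of_pos_right k (by omega))
  have hlt : (2 : ℤ) ^ (k - 1) < 2 ^ (k * m - k * j) := pow_lt_pow_right₀ one_lt_two hexp
  refine mod_cast floor_mul_pow_eq_zero two_ne_zero (Nat.mul_le_mul_left k hj.le)
    (t := t) ?_ ?_ <;> push_cast [ht]
  · positivity
  · exact hlt

lemma Q1_subset_Omega (hk : 1 ≤ k) (hm : 1 ≤ m) : Q1 n k m ⊆ Omega n k m := by
  intro x hx
  have lead := (mem_Q1_iff_floor hk).1 hx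
  have vanish (i : Fin n) {j : ℕ} (hj : j < m) := floor_mul_two_pow_eq_zero_of_lt hk (lead i) hj
  refine ⟨fun i => ?_, fun i => ⟨fun j _ hj => ?_, ?_⟩⟩
  · simpa using Int.floor_eq_zero_iff.1 (vanish i hm)
  · rw [digit, vanish i hj, Int.zero_emod]
    positivity
  · rw [digit, lead i]
    exact Int.emod_eq_of_lt (by positivity) (pow_lt_pow_right₀ one_lt_two (by omega))

lemma pairwiseDisjoint_Omega (hn : 1 ≤ n) (k : ℕ) : (Ici 1).PairwiseDisjoint (Omega n k) := by
  suffices h : ∀ a b, 1 ≤ a → a < b → Disjoint (Omega n k a) (Omega n k b) by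
    intro a ha b hb hab
    exact hab.lt_or_gt.elim (h a b ha) fun hba => (h b a hb hba).symm
  refine fun a b ha hab => disjoint_left.2 fun x hxa hxb => ?_
  exact ((hxb.2 ⟨0, hn⟩).1 a ha hab).ne (hxa.2 ⟨0, hn⟩).2

end Digits

section Mass

variable {n k m : ℕ}

lemma wk_of_mem_Omega (hn : 1 ≤ n) (hm : 1 ≤ m) {x : Fin n → ℝ} (hx : x ∈ Omega n k m) :
    wk n k x = ((2 : ℝ≥0∞) ^ (k * n) / (2 ^ ((k - 1) * n) + 1)) ^ m := by
  obtain ⟨m, rfl⟩ := Nat.exists_eq_add_of_le' hm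
  rw [wk, tsum_eq_single m, indicator_of_mem hx]
  intro l hl
  refine indicator_of_notMem (disjoint_left.1 ?_ hx) _
  exact pairwiseDisjoint_Omega hn k hm (Nat.le_add_left 1 l) (by omega)

lemma setLIntegral_wk_Q1 (hn : 1 ≤ n) (hk : 1 ≤ k) (hm : 1 ≤ m) :
    ∫⁻ x in Q1 n k m, wk n k x = ((2 : ℝ≥0∞) ^ ((k - 1) * n) + 1)⁻¹ ^ m := by
  rw [setLIntegral_congr_fun (measurableSet_Q1 n k m)
      fun x hx => wk_of_mem_Omega hn hm (Q1_subset_Omega hk hm hx),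
    setLIntegral_const, volume_Q1, ← mul_pow, div_eq_mul_inv, mul_right_comm,
    ENNReal.mul_inv_cancel (by simp) (by finiteness), one_mul]

lemma tsum_inv_add_one_pow_succ (b : ℝ≥0∞) : ∑' m : ℕ, (b + 1)⁻¹ ^ (m + 1) = b⁻¹ := by
  obtain rfl | hb := eq_or_ne b ∞
  · simp
  have hb1 : b + 1 ≠ ∞ := by finiteness
  calc ∑' m : ℕ, (b + 1)⁻¹ ^ (m + 1)
      = (b + 1)⁻¹ * (1 - (b + 1)⁻¹)⁻¹ := ENNReal.tsum_geometric_add_one _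
    _ = ((b + 1) * (1 - (b + 1)⁻¹))⁻¹ := (ENNReal.mul_inv (by simp) (by simp [hb])).symm
    _ = b⁻¹ := by
      rw [ENNReal.mul_sub fun _ _ => hb1, mul_one, ENNReal.mul_inv_cancel (by simp) hb1,
        ENNReal.add_sub_cancel_right one_ne_top]

lemma setLIntegral_wk_iUnion_Q1 (hn : 1 ≤ n) (hk : 1 ≤ k) (s : ℕ) :
    ∫⁻ x in ⋃ m, Q1 n k (m + 1 + s), wk n k x
      = ((2 : ℝ≥0∞) ^ ((k - 1) * n))⁻¹ * ((2 ^ ((k - 1) * n) + 1) ^ s)⁻¹ := by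
  have hdisj : Pairwise (Function.onFun Disjoint fun m => Q1 n k (m + 1 + s)) :=
    fun a b hab => (pairwiseDisjoint_Omega hn k (show 1 ≤ a + 1 + s by omega)
      (show 1 ≤ b + 1 + s by omega) (by omega)).mono
        (Q1_subset_Omega hk (by omega)) (Q1_subset_Omega hk (by omega))
  have mass (m : ℕ) := setLIntegral_wk_Q1 hn hk (show 1 ≤ m + 1 + s by omega)
  rw [lintegral_iUnion (fun m => measurableSet_Q1 n k _) hdisj]
  simp only [mass, pow_add _ _ s, ENNReal.tsum_mul_right, tsum_inv_add_one_pow_succ,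
    ENNReal.inv_pow]

end Mass

theorem wk_mass_Gamma_general (n k : ℕ) (hn : 1 ≤ n) (hk : 1 ≤ k) :
    (∫⁻ x in Gamma n k, wk n k x
        = ((2:ℝ≥0∞)^((k-1)*n))⁻¹ * ((((2:ℝ≥0∞)^((k-1)*n) + 1))^2)⁻¹) ∧
    Ak n k * ∫⁻ x in Gamma n k, wk n k x = 1 := by
  have mass := setLIntegral_wk_iUnion_Q1 hn hk 2
  refine ⟨mass, ?_⟩
  rw [Gamma, mass, Ak, mul_mul_mul_comm, ENNReal.mul_inv_cancel (by simp) (by finiteness),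
    ENNReal.mul_inv_cancel (by simp) (by finiteness), one_mul]

/-- For `n ≥ 1` and `k ≥ 3`:
`∫_{Γ(k)} w_k = 2^{-(k-1)n} (2^{(k-1)n}+1)^{-2}`, equivalently `A_k ∫_{Γ(k)} w_k = 1`. -/
theorem wk_mass_Gamma (n k : ℕ) (hn : 1 ≤ n) (hk : 3 ≤ k) :
    (∫⁻ x in Gamma n k, wk n k x
        = ((2:ℝ≥0∞)^((k-1)*n))⁻¹ * ((((2:ℝ≥0∞)^((k-1)*n) + 1))^2)⁻¹) ∧
    Ak n k * ∫⁻ x in Gamma n k, wk n k x = 1 :=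
  wk_mass_Gamma_general n k hn (by omega)
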